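/- Let N ≥ 1 and σ > 0 with 0 < Nσ ≤ 4. Then: (ii) the function m ↦ E_min(m) (with values in [-∞,∞)) is concave on (0,∞); (iii) E_min(m) ≤ -m for every m > 0; (iv) E_min(m) → 0 as m ↓ 0 and E_min(m)/m → -1 as m ↓ 0. -/

import Mathlib

open MeasureTheory Filter Topology

noncomputable section

abbrev Esp (N : ℕ) := EuclideanSpace ℝ (Fin N)

/-- Smooth compactly supported test functions. -/
def TestFun {N : ℕ} (φ : Esp N → ℂ) : Prop :=
  ContDiff ℝ (⊤ : ℕ∞) φ ∧ HasCompactSupport φ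

/-- Partial derivative in the `i`-th coordinate direction. -/
def pderivC {N : ℕ} (i : Fin N) (φ : Esp N → ℂ) : Esp N → ℂ :=
  fun x => fderiv ℝ φ x (EuclideanSpace.single i (1 : ℝ))

/-- The Laplacian of a (smooth) function. -/
def lapC {N : ℕ} (φ : Esp N → ℂ) : Esp N → ℂ :=
  fun x => ∑ i, pderivC i (pderivC i φ) x

/-- `v` is the weak `i`-th partial derivative of `u`. -/
def IsWeakPDeriv {N : ℕ} (u : Esp N → ℂ) (i : Fin N) (v : Esp N → ℂ) : Prop :=
  ∀ φ : Esp N → ℂ, TestFun φ → ∫ x, u x * pderivC i φ x = - ∫ x, v x * φ x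

/-- `v` is the weak Laplacian of `u`. -/
def IsWeakLap {N : ℕ} (u v : Esp N → ℂ) : Prop :=
  ∀ φ : Esp N → ℂ, TestFun φ → ∫ x, u x * lapC φ x = ∫ x, v x * φ x

/-- An element of the Sobolev space `H²(ℝ^N, ℂ)`: an `L²` function together with its
weak partial derivatives and its weak Laplacian, all in `L²`. -/
structure H2 (N : ℕ) where
  u : Esp N → ℂ
  grad : Fin N → Esp N → ℂ
  lapl : Esp N → ℂ
  u_mem : MemLp u 2 (volume : Measure (Esp N))
  grad_mem : ∀ i, MemLp (grad i) 2 (volume : Measure (Esp N))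
  lapl_mem : MemLp lapl 2 (volume : Measure (Esp N))
  grad_spec : ∀ i, IsWeakPDeriv u i (grad i)
  lapl_spec : IsWeakLap u lapl

namespace H2

variable {N : ℕ}

/-- `∫ |u|²`. -/
def massSq (U : H2 N) : ℝ := ∫ x, ‖U.u x‖ ^ 2

/-- `∫ |∇u|²`. -/
def gradSq (U : H2 N) : ℝ := ∑ i, ∫ x, ‖U.grad i x‖ ^ 2

/-- `∫ |Δu|²`. -/
def lapSq (U : H2 N) : ℝ := ∫ x, ‖U.lapl x‖ ^ 2

/-- `∫ |u|^{2σ+2}`. -/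
def pPow (σ : ℝ) (U : H2 N) : ℝ := ∫ x, ‖U.u x‖ ^ (2 * σ + 2)

/-- The energy `E(u) = ∫|Δu|² - 2∫|∇u|² - (1/(σ+1))∫|u|^{2σ+2}`. -/
def energy (σ : ℝ) (U : H2 N) : ℝ :=
  U.lapSq - 2 * U.gradSq - (1 / (σ + 1)) * U.pPow σ

/-- The square of the `H²` norm. -/
def h2NormSq (U : H2 N) : ℝ := U.massSq + U.gradSq + U.lapSq

/-- `u` does not vanish almost everywhere. -/
def Nontriv (U : H2 N) : Prop := ¬ (U.u =ᵐ[(volume : Measure (Esp N))] 0)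

end H2

/-- `E_min(m) = inf {E(u) : u ∈ H², ∫|u|² = m}`, with values in `EReal`. -/
def EminE (N : ℕ) (σ m : ℝ) : EReal :=
  ⨅ (U : H2 N) (_ : U.massSq = m), ((U.energy σ : ℝ) : EReal)

/-- The `L^p` norm (as a real number) of a function on `ℝ^N`. -/
def rLp {N : ℕ} (p : ℝ) (f : Esp N → ℂ) : ℝ :=
  (eLpNorm f (ENNReal.ofReal p) (volume : Measure (Esp N))).toReal


/-- The best constant `B(N,σ)` in the Gagliardo–Nirenberg–Sobolev inequality
`‖u‖_{L^{2σ+2}}^{2σ+2} ≤ B ‖Δu‖_{L²}^{Nσ/2} ‖u‖_{L²}^{2+2σ-Nσ/2}`. -/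
def GNconst (N : ℕ) (σ : ℝ) : ℝ :=
  sSup {r : ℝ | ∃ U : H2 N, U.Nontriv ∧
    r = U.pPow σ /
      (rLp 2 U.lapl ^ ((N : ℝ) * σ / 2) * rLp 2 U.u ^ (2 + 2 * σ - (N : ℝ) * σ / 2))}

/-- `k* = (σ+1)^{1/σ} B(N,σ)^{-1/σ}`. -/
def kstar (N : ℕ) (σ : ℝ) : ℝ := (σ + 1) ^ (1 / σ) * GNconst N σ ^ (-(1 / σ))

/-- Strong `H²` convergence of `v k (· + xs k)` to `U`. -/
def H2TendstoTrans {N : ℕ} (v : ℕ → H2 N) (xs : ℕ → Esp N) (U : H2 N) : Prop :=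
  Tendsto (fun k => eLpNorm (fun x => (v k).u (x + xs k) - U.u x) 2
      (volume : Measure (Esp N))) atTop (nhds 0) ∧
  (∀ i, Tendsto (fun k => eLpNorm (fun x => (v k).grad i (x + xs k) - U.grad i x) 2
      (volume : Measure (Esp N))) atTop (nhds 0)) ∧
  Tendsto (fun k => eLpNorm (fun x => (v k).lapl (x + xs k) - U.lapl x) 2
      (volume : Measure (Esp N))) atTop (nhds 0)

/-- `u` is a weak (`H^{-2}`) solution of `Δ²u + 2Δu + (1+c)u - |u|^{2σ}u = 0`. -/
def SolvesSW {N : ℕ} (σ c : ℝ) (U : H2 N) : Prop :=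
  ∀ φ : Esp N → ℂ, TestFun φ →
    (∫ x, U.lapl x * lapC φ x) + 2 * (∫ x, U.lapl x * φ x) +
        ((1 + c : ℝ) : ℂ) * (∫ x, U.u x * φ x) -
        (∫ x, ((‖U.u x‖ ^ (2 * σ) : ℝ) : ℂ) * U.u x * φ x) = 0

/-- `T_c(u) = ∫|Δu|² - 2∫|∇u|² + (1+c)∫|u|²`. -/
def Tfun {N : ℕ} (c : ℝ) (U : H2 N) : ℝ := U.lapSq - 2 * U.gradSq + (1 + c) * U.massSq

/-- `t(c) = inf {T_c(u) : ∫|u|^{2σ+2} = 1}`. -/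
def tmin (N : ℕ) (σ c : ℝ) : ℝ := sInf {r : ℝ | ∃ U : H2 N, U.pPow σ = 1 ∧ r = Tfun c U}

/-- The action `S_c(u) = E(u) + (1+c)‖u‖_{L²}² = T_c(u) - (1/(σ+1))∫|u|^{2σ+2}`. -/
def action {N : ℕ} (σ c : ℝ) (U : H2 N) : ℝ := U.energy σ + (1 + c) * U.massSq

/-!
On the Fourier side `-Δ` is multiplication by `s = (2π‖ξ‖)²`, and `s² - 2s = (s - 1)² - 1`. Hence
the quadratic part of the energy is at least `-m`, and it comes arbitrarily close to `-m` for
functions whose Fourier transform concentrates near the sphere `s = 1`, so `E_min(m) ≤ -m`. For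
fixed `u`, `t ↦ E(√t u)` is the sum of a linear term and a negative multiple of `t ^ (σ + 1)`,
hence concave, and `E_min` is an infimum of such functions. For the lower bound, splitting `û` at a
frequency-dependent height (Paley's inequality) gives
`∫ |u| ^ (2σ + 2) ≤ C m ^ σ (m + ∫ |Δu|²)` when `Nσ ≤ 4`, so that the nonlinear term is negligible
against the quadratic part as `m ↓ 0`.
-/

section

open scoped FourierTransform SchwartzMap ContDiff LineDeriv Laplacian ENNReal

section CompactlySupportedDense

variable {E F : Type*} [NormedAddCommGroup E] [NormedSpace ℝ E]
  [NormedAddCommGroup F] [NormedSpace ℝ F]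

lemma exists_norm_iteratedFDeriv_one_sub_le_mul_norm {χ : E → ℝ} (hχ : ContDiff ℝ ∞ χ)
    (hχc : HasCompactSupport χ) (hχ₁ : ∀ x ∈ Metric.ball (0 : E) 1, χ x = 1) (i : ℕ) :
    ∃ C, 0 ≤ C ∧ ∀ x, ‖iteratedFDeriv ℝ i (fun y => 1 - χ y) x‖ ≤ C * ‖x‖ := by
  have hi : ContDiff ℝ i χ := hχ.of_le (mod_cast le_top)
  obtain ⟨B, hB⟩ := (hχ.continuous_iteratedFDeriv (m := i)
    (mod_cast le_top)).bounded_above_of_compact_support (hχc.iteratedFDeriv i)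
  have hB₀ : 0 ≤ B := (norm_nonneg _).trans (hB 0)
  refine ⟨1 + B, by positivity, fun x => ?_⟩
  rcases lt_or_ge ‖x‖ 1 with hx | hx
  · have hzero : (fun y => 1 - χ y) =ᶠ[𝓝 x] fun _ => 0 := by
      filter_upwards [Metric.isOpen_ball.mem_nhds (by simpa using hx : x ∈ Metric.ball 0 1)]
        with y hy
      rw [hχ₁ y hy, sub_self]
    rw [(hzero.iteratedFDeriv ℝ i).self_of_nhds, iteratedFDeriv_fun_zero, Pi.zero_apply, norm_zero]
    positivity
  · have hone : ‖iteratedFDeriv ℝ i (fun _ : E => (1 : ℝ)) x‖ ≤ 1 := by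
      rcases Nat.eq_zero_or_pos i with rfl | hpos
      · simp
      · simp [iteratedFDeriv_const_of_ne hpos.ne']
    calc ‖iteratedFDeriv ℝ i (fun y => 1 - χ y) x‖
        ≤ ‖iteratedFDeriv ℝ i (fun _ : E => (1 : ℝ)) x‖ + ‖iteratedFDeriv ℝ i χ x‖ := by
          rw [fun_iteratedFDeriv_sub contDiff_const hi]
          exact norm_sub_le _ _
      _ ≤ (1 + B) * 1 := by linarith [hB x]
      _ ≤ (1 + B) * ‖x‖ := by gcongr

lemma exists_norm_iteratedFDeriv_one_sub_comp_smul_le {χ : E → ℝ} (hχ : ContDiff ℝ ∞ χ)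
    (hχc : HasCompactSupport χ) (hχ₁ : ∀ x ∈ Metric.ball (0 : E) 1, χ x = 1) (i : ℕ) :
    ∃ C, 0 ≤ C ∧ ∀ c : ℝ, 0 < c → c ≤ 1 → ∀ x,
      ‖iteratedFDeriv ℝ i (fun y => 1 - χ (c • y)) x‖ ≤ C * ‖x‖ * c := by
  obtain ⟨C, hC₀, hC⟩ := exists_norm_iteratedFDeriv_one_sub_le_mul_norm hχ hχc hχ₁ i
  refine ⟨C, hC₀, fun c hc hc₁ x => ?_⟩
  have hη : ContDiff ℝ i fun y => 1 - χ y := (contDiff_const.sub hχ).of_le (mod_cast le_top)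
  rw [iteratedFDeriv_comp_const_smul c hη, norm_smul, norm_pow, Real.norm_of_nonneg hc.le]
  calc c ^ i * ‖iteratedFDeriv ℝ i (fun y => 1 - χ y) (c • x)‖
      ≤ 1 * (C * ‖c • x‖) := by gcongr; exacts [pow_le_one₀ hc.le hc₁, hC _]
    _ = C * ‖x‖ * c := by rw [norm_smul, Real.norm_of_nonneg hc.le]; ring

lemma exists_seminorm_le_mul_of_eq_one_sub_smul {χ : E → ℝ} (hχ : ContDiff ℝ ∞ χ)
    (hχc : HasCompactSupport χ) (hχ₁ : ∀ x ∈ Metric.ball (0 : E) 1, χ x = 1) (φ : 𝓢(E, F))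
    (k n : ℕ) :
    ∃ K, ∀ c : ℝ, 0 < c → c ≤ 1 → ∀ ψ : 𝓢(E, F),
      (∀ x, ψ x = (1 - χ (c • x)) • φ x) → SchwartzMap.seminorm ℝ k n ψ ≤ K * c := by
  choose C hC₀ hC using exists_norm_iteratedFDeriv_one_sub_comp_smul_le hχ hχc hχ₁
  refine ⟨∑ i ∈ Finset.range (n + 1),
    n.choose i * C i * SchwartzMap.seminorm ℝ (k + 1) (n - i) φ, fun c hc hc₁ ψ hψ => ?_⟩
  refine SchwartzMap.seminorm_le_bound ℝ k n ψ (mul_nonneg (Finset.sum_nonneg fun i _ =>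
    mul_nonneg (mul_nonneg (by positivity) (hC₀ i)) (apply_nonneg _ _)) hc.le) fun x => ?_
  rw [show ⇑ψ = fun x => (1 - χ (c • x)) • φ x from funext hψ]
  calc ‖x‖ ^ k * ‖iteratedFDeriv ℝ n (fun x => (1 - χ (c • x)) • φ x) x‖
      ≤ ‖x‖ ^ k * ∑ i ∈ Finset.range (n + 1), n.choose i *
          ‖iteratedFDeriv ℝ i (fun y => 1 - χ (c • y)) x‖ * ‖iteratedFDeriv ℝ (n - i) φ x‖ := by
        gcongr
        exact norm_iteratedFDeriv_smul_le
          (contDiff_const.sub (hχ.comp (contDiff_const_smul c))) (φ.smooth _) x (mod_cast le_top)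
    _ ≤ ‖x‖ ^ k * ∑ i ∈ Finset.range (n + 1), n.choose i *
          (C i * ‖x‖ * c) * ‖iteratedFDeriv ℝ (n - i) φ x‖ := by
        gcongr with i
        exact hC i c hc hc₁ x
    _ = ∑ i ∈ Finset.range (n + 1), n.choose i * C i *
          (‖x‖ ^ (k + 1) * ‖iteratedFDeriv ℝ (n - i) φ x‖) * c := by
        rw [Finset.mul_sum]
        exact Finset.sum_congr rfl fun i _ => by ring
    _ ≤ (∑ i ∈ Finset.range (n + 1),
          n.choose i * C i * SchwartzMap.seminorm ℝ (k + 1) (n - i) φ) * c := by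
        rw [Finset.sum_mul]
        gcongr with i
        · exact mul_nonneg (by positivity) (hC₀ i)
        · exact SchwartzMap.le_seminorm ℝ (k + 1) (n - i) φ x

theorem dense_setOf_hasCompactSupport_schwartzMap [HasContDiffBump E] [FiniteDimensional ℝ E] :
    Dense {φ : 𝓢(E, F) | HasCompactSupport φ} := by
  intro φ
  let χ : ContDiffBump (0 : E) := ⟨1, 2, one_pos, one_lt_two⟩
  have hcompact {c : ℝ} (hc : 0 < c) : HasCompactSupport fun x => χ (c • x) • φ x :=
    (χ.hasCompactSupport.comp_smul hc.ne').smul_right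
  have hsmooth (c : ℝ) : ContDiff ℝ ∞ fun x => χ (c • x) • φ x :=
    (χ.contDiff.comp (contDiff_const_smul c)).smul (φ.smooth _)
  let ψ (c : ℝ) : 𝓢(E, F) :=
    if hc : 0 < c then (hcompact hc).toSchwartzMap (hsmooth c) else 0
  have hψ {c : ℝ} (hc : 0 < c) (x : E) : ψ c x = χ (c • x) • φ x := by simp [ψ, hc]
  have hlim : Tendsto ψ (𝓝[>] 0) (𝓝 φ) := by
    rw [(schwartz_withSeminorms ℝ E F).tendsto_nhds]
    rintro ⟨k, n⟩ ε hε
    obtain ⟨K, hK⟩ := exists_seminorm_le_mul_of_eq_one_sub_smul χ.contDiff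
      χ.hasCompactSupport (fun x hx => χ.one_of_mem_closedBall (Metric.ball_subset_closedBall hx))
      φ k n
    have hsmall : ∀ᶠ c in 𝓝[>] (0 : ℝ), K * c < ε :=
      (tendsto_nhdsWithin_of_tendsto_nhds (by simpa using (continuous_const_mul K).tendsto 0))
        |>.eventually_lt_const hε
    filter_upwards [hsmall, Ioc_mem_nhdsGT one_pos] with c hcε ⟨hc, hc₁⟩
    rw [SchwartzMap.schwartzSeminormFamily_apply, map_sub_rev]
    refine (hK c hc hc₁ _ fun x => ?_).trans_lt hcε
    rw [sub_apply, hψ hc, sub_smul, one_smul]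
  refine mem_closure_of_tendsto hlim (eventually_mem_nhdsWithin.mono fun c hc => ?_)
  change HasCompactSupport (ψ c)
  rw [show ⇑(ψ c) = fun x => χ (c • x) • φ x from funext (hψ hc)]
  exact hcompact hc

end CompactlySupportedDense

section TemperedDistribution

theorem temperedDistribution_ext_of_hasCompactSupport {E F : Type*} [NormedAddCommGroup E]
    [NormedSpace ℝ E] [FiniteDimensional ℝ E] [HasContDiffBump E] [NormedAddCommGroup F]
    [NormedSpace ℂ F] {T₁ T₂ : 𝓢'(E, F)}
    (h : ∀ φ : 𝓢(E, ℂ), HasCompactSupport φ → T₁ φ = T₂ φ) : T₁ = T₂ :=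
  DFunLike.coe_injective <|
    Continuous.ext_on dense_setOf_hasCompactSupport_schwartzMap T₁.continuous T₂.continuous
      fun φ hφ => h φ hφ

lemma toTemperedDistribution_toLp_apply {E F : Type*} [NormedAddCommGroup E] [NormedSpace ℝ E]
    [MeasurableSpace E] [BorelSpace E] [NormedAddCommGroup F] [NormedSpace ℂ F] [CompleteSpace F]
    {μ : Measure E} [μ.HasTemperateGrowth] {p : ℝ≥0∞} [Fact (1 ≤ p)] {f : E → F}
    (hf : MemLp f p μ) (φ : 𝓢(E, ℂ)) : (hf.toLp f : 𝓢'(E, F)) φ = ∫ x, φ x • f x ∂μ := by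
  rw [Lp.toTemperedDistribution_apply]
  exact integral_congr_ae (hf.coeFn_toLp.mono fun x hx => by simp only [hx])

theorem coeFn_ae_eq_smul_of_toTemperedDistribution_eq {E F : Type*} [NormedAddCommGroup E]
    [NormedSpace ℝ E] [FiniteDimensional ℝ E] [MeasurableSpace E] [BorelSpace E]
    [NormedAddCommGroup F] [NormedSpace ℂ F] [CompleteSpace F] {μ : Measure E}
    [μ.HasTemperateGrowth] [IsLocallyFiniteMeasure μ] {p : ℝ≥0∞} [Fact (1 ≤ p)]
    {w : E → ℂ} (hw : w.HasTemperateGrowth)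
    {f g : Lp F p μ}
    (h : (g : 𝓢'(E, F)) = TemperedDistribution.smulLeftCLM F w (f : 𝓢'(E, F))) :
    g =ᵐ[μ] fun x => w x • f x := by
  have hloc (k : Lp F p μ) : LocallyIntegrable k μ :=
    (Lp.memLp k).locallyIntegrable Fact.out
  refine ae_eq_of_integral_contDiff_smul_eq (hloc g) ((hloc f).continuous_smul hw.1.continuous) ?_
  intro θ hθ hθc
  have hθ' : HasCompactSupport (Complex.ofRealCLM ∘ θ) := hθc.comp_left (map_zero _)
  let φ : 𝓢(E, ℂ) := hθ'.toSchwartzMap (Complex.ofRealCLM.contDiff.comp hθ)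
  have hφ : (g : 𝓢'(E, F)) φ = (f : 𝓢'(E, F)) (SchwartzMap.smulLeftCLM ℂ w φ) := by
    rw [h, TemperedDistribution.smulLeftCLM_apply_apply]
  rw [Lp.toTemperedDistribution_apply, Lp.toTemperedDistribution_apply] at hφ
  simpa [φ, SchwartzMap.smulLeftCLM_apply_apply hw, mul_comm (w _), mul_smul] using hφ

variable {E F : Type*} [NormedAddCommGroup E] [InnerProductSpace ℝ E] [FiniteDimensional ℝ E]
  [MeasurableSpace E] [BorelSpace E] [NormedAddCommGroup F] [InnerProductSpace ℂ F]
  [CompleteSpace F]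

theorem coeFn_fourier_ae_eq_of_lineDeriv_eq {f g : Lp (α := E) F 2} {m : E}
    (h : ∂_{m} (f : 𝓢'(E, F)) = g) :
    (𝓕 g : Lp (α := E) F 2) =ᵐ[volume]
      fun ξ => (2 * Real.pi * Complex.I * inner ℝ ξ m : ℂ) • (𝓕 f : Lp (α := E) F 2) ξ := by
  have hinner : (fun ξ : E => (inner ℝ ξ m : ℂ)).HasTemperateGrowth := by fun_prop
  refine coeFn_ae_eq_smul_of_toTemperedDistribution_eq
    ((Function.HasTemperateGrowth.const _).mul hinner) ?_
  rw [← Lp.fourier_toTemperedDistribution_eq, ← Lp.fourier_toTemperedDistribution_eq, ← h,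
    TemperedDistribution.lineDeriv_eq_fourierMultiplierCLM,
    TemperedDistribution.fourierMultiplierCLM_apply, FourierTransform.fourier_smul,
    FourierTransform.fourier_fourierInv_eq, ← smul_apply,
    ← TemperedDistribution.smulLeftCLM_smul hinner]
  rfl

theorem coeFn_fourier_ae_eq_of_laplacian_eq {f g : Lp (α := E) F 2}
    (h : Δ (f : 𝓢'(E, F)) = g) :
    (𝓕 g : Lp (α := E) F 2) =ᵐ[volume]
      fun ξ => (-(2 * Real.pi * ‖ξ‖) ^ 2 : ℂ) • (𝓕 f : Lp (α := E) F 2) ξ := by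
  have hnorm : (fun ξ : E => ((‖ξ‖ ^ 2 : ℝ) : ℂ)).HasTemperateGrowth := by fun_prop
  have hsymbol : (fun ξ : E => (-(2 * Real.pi * ‖ξ‖) ^ 2 : ℂ))
      = ((-(2 * Real.pi) ^ 2 : ℝ) : ℂ) • fun ξ : E => ((‖ξ‖ ^ 2 : ℝ) : ℂ) := by
    ext ξ
    simp only [Pi.smul_apply, smul_eq_mul]
    push_cast
    ring
  refine coeFn_ae_eq_smul_of_toTemperedDistribution_eq
    (hsymbol ▸ (Function.HasTemperateGrowth.const _).mul hnorm) ?_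
  rw [← Lp.fourier_toTemperedDistribution_eq, ← Lp.fourier_toTemperedDistribution_eq, ← h,
    TemperedDistribution.laplacian_eq_fourierMultiplierCLM,
    TemperedDistribution.fourierMultiplierCLM_apply, hsymbol,
    TemperedDistribution.smulLeftCLM_smul hnorm, ← Complex.coe_smul, FourierTransform.fourier_smul,
    FourierTransform.fourier_fourierInv_eq, smul_apply]

end TemperedDistribution

section Plancherel

theorem integral_norm_sq_coeFn_lp {α F : Type*} [MeasurableSpace α] {μ : Measure α}
    [NormedAddCommGroup F] (f : Lp F 2 μ) : ∫ x, ‖f x‖ ^ 2 ∂μ = ‖f‖ ^ 2 := by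
  have hnorm : ‖f‖ = (∫ x, ‖f x‖ ^ (2 : ℝ) ∂μ) ^ (2 : ℝ)⁻¹ := by
    rw [Lp.norm_def, (Lp.memLp f).eLpNorm_eq_integral_rpow_norm two_ne_zero ENNReal.ofNat_ne_top,
      ENNReal.toReal_ofReal (by positivity), ENNReal.toReal_ofNat]
  rw [hnorm, ← Real.rpow_mul_natCast (by positivity)]
  norm_num

lemma integrable_norm_sq_coeFn_lp {α F : Type*} [MeasurableSpace α] {μ : Measure α}
    [NormedAddCommGroup F] (f : Lp F 2 μ) : Integrable (fun x => ‖f x‖ ^ 2) μ :=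
  (Lp.memLp f).integrable_norm_pow two_ne_zero

theorem integral_norm_sq_fourier_toLp {E F : Type*} [NormedAddCommGroup E] [InnerProductSpace ℝ E]
    [FiniteDimensional ℝ E] [MeasurableSpace E] [BorelSpace E] [NormedAddCommGroup F]
    [InnerProductSpace ℂ F] [CompleteSpace F] {f : E → F} (hf : MemLp f 2) :
    ∫ ξ, ‖(𝓕 hf.toLp : Lp (α := E) F 2) ξ‖ ^ 2 = ∫ x, ‖f x‖ ^ 2 := by
  rw [integral_norm_sq_coeFn_lp, Lp.norm_fourier_eq, ← integral_norm_sq_coeFn_lp]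
  exact integral_congr_ae (hf.coeFn_toLp.mono fun x hx => by simp only [hx])

end Plancherel

section FourierSide

variable {N : ℕ}

lemma pderivC_coe_schwartzMap (i : Fin N) (φ : 𝓢(Esp N, ℂ)) :
    pderivC i φ = ∂_{EuclideanSpace.single i (1 : ℝ)} φ := rfl

lemma lapC_coe_schwartzMap (φ : 𝓢(Esp N, ℂ)) : lapC φ = Δ φ := by
  ext x
  simp [SchwartzMap.laplacian_eq_sum (EuclideanSpace.basisFun (Fin N) ℝ), lapC,
    pderivC_coe_schwartzMap]

lemma TestFun.of_schwartzMap {φ : 𝓢(Esp N, ℂ)} (hφ : HasCompactSupport φ) : TestFun φ :=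
  ⟨φ.smooth ⊤, hφ⟩

namespace H2

theorem lineDeriv_toLp_u (U : H2 N) (i : Fin N) :
    ∂_{EuclideanSpace.single i (1 : ℝ)} (U.u_mem.toLp U.u : 𝓢'(Esp N, ℂ)) =
      (U.grad_mem i).toLp (U.grad i) := by
  refine temperedDistribution_ext_of_hasCompactSupport fun φ hφ => ?_
  have hweak := U.grad_spec i φ (.of_schwartzMap hφ)
  rw [pderivC_coe_schwartzMap] at hweak
  rw [TemperedDistribution.lineDerivOp_apply_apply, map_neg, toTemperedDistribution_toLp_apply,
    toTemperedDistribution_toLp_apply, neg_eq_iff_eq_neg]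
  simpa only [smul_eq_mul, mul_comm] using hweak

theorem laplacian_toLp_u (U : H2 N) :
    Δ (U.u_mem.toLp U.u : 𝓢'(Esp N, ℂ)) = U.lapl_mem.toLp U.lapl := by
  refine temperedDistribution_ext_of_hasCompactSupport fun φ hφ => ?_
  have hweak := U.lapl_spec φ (.of_schwartzMap hφ)
  rw [lapC_coe_schwartzMap] at hweak
  rw [TemperedDistribution.laplacian_apply_apply, toTemperedDistribution_toLp_apply,
    toTemperedDistribution_toLp_apply]
  simpa only [smul_eq_mul, mul_comm] using hweak

/-- The Fourier transform `û ∈ L²(ℝ^N)` of an element of `H²(ℝ^N)`. -/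
def hat (U : H2 N) : Lp ℂ 2 (volume : Measure (Esp N)) := 𝓕 (U.u_mem.toLp U.u)

end H2

/-- The Fourier symbol `(2π|ξ|)²` of `-Δ`, for the transform with kernel `exp (-2πi⟨x, ξ⟩)`. -/
def negLaplacianSymbol (ξ : Esp N) : ℝ := (2 * Real.pi * ‖ξ‖) ^ 2

lemma continuous_negLaplacianSymbol : Continuous (negLaplacianSymbol (N := N)) := by
  unfold negLaplacianSymbol
  fun_prop

lemma negLaplacianSymbol_eq_sum (ξ : Esp N) :
    negLaplacianSymbol ξ = ∑ i, (2 * Real.pi * ξ i) ^ 2 := by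
  simp only [negLaplacianSymbol, mul_pow, EuclideanSpace.norm_sq_eq, Real.norm_eq_abs, sq_abs,
    Finset.mul_sum]

namespace H2

lemma norm_sq_fourier_grad_ae_eq (U : H2 N) (i : Fin N) :
    (fun ξ => ‖(𝓕 ((U.grad_mem i).toLp (U.grad i)) : Lp ℂ 2 (volume : Measure (Esp N))) ξ‖ ^ 2)
      =ᵐ[volume] fun ξ => (2 * Real.pi * ξ i) ^ 2 * ‖U.hat ξ‖ ^ 2 := by
  filter_upwards [coeFn_fourier_ae_eq_of_lineDeriv_eq (U.lineDeriv_toLp_u i)] with ξ hξ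
  rw [hξ, norm_smul, mul_pow, hat]
  simp [mul_pow, EuclideanSpace.inner_single_right]

lemma norm_sq_fourier_lapl_ae_eq (U : H2 N) :
    (fun ξ => ‖(𝓕 (U.lapl_mem.toLp U.lapl) : Lp ℂ 2 (volume : Measure (Esp N))) ξ‖ ^ 2) =ᵐ[volume]
      fun ξ => negLaplacianSymbol ξ ^ 2 * ‖U.hat ξ‖ ^ 2 := by
  filter_upwards [coeFn_fourier_ae_eq_of_laplacian_eq U.laplacian_toLp_u] with ξ hξ
  rw [hξ, norm_smul, mul_pow, hat, negLaplacianSymbol]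
  simp [mul_pow]

lemma integrable_norm_sq_hat (U : H2 N) : Integrable fun ξ => ‖U.hat ξ‖ ^ 2 :=
  integrable_norm_sq_coeFn_lp U.hat

lemma integrable_coord_sq_mul_norm_sq_hat (U : H2 N) (i : Fin N) :
    Integrable fun ξ : Esp N => (2 * Real.pi * ξ i) ^ 2 * ‖U.hat ξ‖ ^ 2 :=
  (integrable_norm_sq_coeFn_lp _).congr (U.norm_sq_fourier_grad_ae_eq i)

lemma integrable_symbol_mul_norm_sq_hat (U : H2 N) :
    Integrable fun ξ => negLaplacianSymbol ξ * ‖U.hat ξ‖ ^ 2 := by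
  simpa only [negLaplacianSymbol_eq_sum, Finset.sum_mul] using
    integrable_finsetSum _ fun i _ => U.integrable_coord_sq_mul_norm_sq_hat i

lemma integrable_symbol_sq_mul_norm_sq_hat (U : H2 N) :
    Integrable fun ξ => negLaplacianSymbol ξ ^ 2 * ‖U.hat ξ‖ ^ 2 :=
  (integrable_norm_sq_coeFn_lp _).congr U.norm_sq_fourier_lapl_ae_eq

theorem massSq_eq_integral_hat (U : H2 N) : U.massSq = ∫ ξ, ‖U.hat ξ‖ ^ 2 :=
  (integral_norm_sq_fourier_toLp U.u_mem).symm

theorem gradSq_eq_integral_hat (U : H2 N) :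
    U.gradSq = ∫ ξ, negLaplacianSymbol ξ * ‖U.hat ξ‖ ^ 2 := by
  simp only [negLaplacianSymbol_eq_sum, Finset.sum_mul]
  rw [integral_finsetSum _ fun i _ => U.integrable_coord_sq_mul_norm_sq_hat i]
  exact Finset.sum_congr rfl fun i _ => (integral_norm_sq_fourier_toLp (U.grad_mem i)).symm.trans
    (integral_congr_ae (U.norm_sq_fourier_grad_ae_eq i))

theorem lapSq_eq_integral_hat (U : H2 N) :
    U.lapSq = ∫ ξ, negLaplacianSymbol ξ ^ 2 * ‖U.hat ξ‖ ^ 2 :=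
  (integral_norm_sq_fourier_toLp U.lapl_mem).symm.trans
    (integral_congr_ae U.norm_sq_fourier_lapl_ae_eq)

theorem integral_sq_mul_norm_sq_hat (U : H2 N) (a : ℝ) :
    ∫ ξ, (a * negLaplacianSymbol ξ - 1) ^ 2 * ‖U.hat ξ‖ ^ 2 =
      a ^ 2 * U.lapSq - 2 * a * U.gradSq + U.massSq := by
  have hlap := U.integrable_symbol_sq_mul_norm_sq_hat.const_mul (a ^ 2)
  have hgrad := U.integrable_symbol_mul_norm_sq_hat.const_mul (2 * a)
  calc ∫ ξ, (a * negLaplacianSymbol ξ - 1) ^ 2 * ‖U.hat ξ‖ ^ 2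
      = ∫ ξ, a ^ 2 * (negLaplacianSymbol ξ ^ 2 * ‖U.hat ξ‖ ^ 2) -
          2 * a * (negLaplacianSymbol ξ * ‖U.hat ξ‖ ^ 2) + ‖U.hat ξ‖ ^ 2 := by
        congr with ξ
        ring
    _ = a ^ 2 * U.lapSq - 2 * a * U.gradSq + U.massSq := by
        rw [integral_add (hlap.sub' hgrad) U.integrable_norm_sq_hat, integral_sub hlap hgrad,
          integral_const_mul, integral_const_mul, lapSq_eq_integral_hat, gradSq_eq_integral_hat,
          massSq_eq_integral_hat]

theorem two_mul_gradSq_le (U : H2 N) {a : ℝ} (ha : 0 < a) :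
    2 * U.gradSq ≤ a * U.lapSq + U.massSq / a := by
  have hnonneg : 0 ≤ ∫ ξ, (a * negLaplacianSymbol ξ - 1) ^ 2 * ‖U.hat ξ‖ ^ 2 :=
    integral_nonneg fun ξ => by positivity
  rw [integral_sq_mul_norm_sq_hat] at hnonneg
  have hdiv := div_nonneg hnonneg ha.le
  have hsplit : (a ^ 2 * U.lapSq - 2 * a * U.gradSq + U.massSq) / a =
      a * U.lapSq - 2 * U.gradSq + U.massSq / a := by field_simp
  linarith

end H2

end FourierSide

section TrialFunctions

variable {N : ℕ}

lemma TestFun.exists_schwartzMap_coe_eq {ψ : Esp N → ℂ} (hψ : TestFun ψ) :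
    ∃ φ : 𝓢(Esp N, ℂ), ⇑φ = ψ :=
  ⟨hψ.2.toSchwartzMap hψ.1, rfl⟩

namespace H2

/-- A Schwartz function, with its classical derivatives, as an element of `H²(ℝ^N)`. -/
def ofSchwartz (φ : 𝓢(Esp N, ℂ)) : H2 N where
  u := φ
  grad i := (∂_{EuclideanSpace.single i (1 : ℝ)} φ : 𝓢(Esp N, ℂ))
  lapl := (Δ φ : 𝓢(Esp N, ℂ))
  u_mem := φ.memLp 2 volume
  grad_mem i := (∂_{EuclideanSpace.single i (1 : ℝ)} φ : 𝓢(Esp N, ℂ)).memLp 2 volume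
  lapl_mem := (Δ φ : 𝓢(Esp N, ℂ)).memLp 2 volume
  grad_spec i _ hψ := by
    obtain ⟨ψ, rfl⟩ := hψ.exists_schwartzMap_coe_eq
    rw [pderivC_coe_schwartzMap, SchwartzMap.integral_mul_lineDerivOp_right_eq_neg_left]
  lapl_spec _ hψ := by
    obtain ⟨ψ, rfl⟩ := hψ.exists_schwartzMap_coe_eq
    rw [lapC_coe_schwartzMap, SchwartzMap.integral_mul_laplacian_right_eq_left]

lemma hat_ofSchwartz_ae_eq (φ : 𝓢(Esp N, ℂ)) :
    (ofSchwartz φ).hat =ᵐ[volume] ⇑(𝓕 φ : 𝓢(Esp N, ℂ)) := by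
  have htoLp : (ofSchwartz φ).hat = (𝓕 φ : 𝓢(Esp N, ℂ)).toLp 2 volume :=
    SchwartzMap.toLp_fourier_eq φ
  rw [htoLp]
  exact SchwartzMap.coeFn_toLp _ 2 volume

theorem exists_hat_eq_zero_off {S : Set (Esp N)} (hS : IsOpen S) (hne : S.Nonempty) :
    ∃ U : H2 N, 0 < U.massSq ∧ ∀ᵐ ξ, ξ ∉ S → U.hat ξ = 0 := by
  obtain ⟨ξ₀, hξ₀⟩ := hne
  obtain ⟨θ, hθsupp, hθc, hθ, -, hθ₀⟩ := exists_contDiff_tsupport_subset (n := ⊤)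
    (hS.mem_nhds hξ₀)
  have hc : HasCompactSupport (Complex.ofRealCLM ∘ θ) := hθc.comp_left (map_zero _)
  let g : 𝓢(Esp N, ℂ) := hc.toSchwartzMap (Complex.ofRealCLM.contDiff.comp hθ)
  have hg (ξ : Esp N) : g ξ = θ ξ := rfl
  have hhat : (ofSchwartz (𝓕⁻ g)).hat =ᵐ[volume] g := by
    simpa only [FourierTransform.fourier_fourierInv_eq] using hat_ofSchwartz_ae_eq (𝓕⁻ g)
  have hmass : (ofSchwartz (𝓕⁻ g)).massSq = ∫ ξ, ‖g ξ‖ ^ 2 := by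
    rw [massSq_eq_integral_hat]
    exact integral_congr_ae (hhat.mono fun ξ hξ => by simp only [hξ])
  refine ⟨ofSchwartz (𝓕⁻ g), ?_, ?_⟩
  · rw [hmass]
    refine Continuous.integral_pos_of_hasCompactSupport_nonneg_nonzero (x := ξ₀)
      (g.continuous.norm.pow 2) (hc.comp_left (g := fun z => ‖z‖ ^ 2) (by simp))
      (fun ξ => by positivity) ?_
    simp [hg, hθ₀]
  · filter_upwards [hhat] with ξ hξ hξS
    rw [hξ, hg, image_eq_zero_of_notMem_tsupport fun h => hξS (hθsupp h), Complex.ofReal_zero]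

theorem exists_lapSq_sub_two_mul_gradSq_le (hN : 1 ≤ N) {ε : ℝ} (hε : 0 < ε) :
    ∃ U : H2 N, 0 < U.massSq ∧ U.lapSq - 2 * U.gradSq ≤ -(1 - ε) * U.massSq := by
  let S : Set (Esp N) := {ξ | (negLaplacianSymbol ξ - 1) ^ 2 < ε}
  have hS : IsOpen S :=
    isOpen_lt ((continuous_negLaplacianSymbol.sub continuous_const).pow 2) continuous_const
  have hne : S.Nonempty := by
    refine ⟨EuclideanSpace.single ⟨0, hN⟩ (2 * Real.pi)⁻¹, ?_⟩
    have hsymbol : negLaplacianSymbol (EuclideanSpace.single (⟨0, hN⟩ : Fin N) (2 * Real.pi)⁻¹)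
        = 1 := by
      rw [negLaplacianSymbol, PiLp.norm_single, Real.norm_of_nonneg (by positivity),
        mul_inv_cancel₀ (by positivity), one_pow]
    rwa [Set.mem_ofPred_eq, hsymbol, sub_self, zero_pow two_ne_zero]
  obtain ⟨U, hU, hsupp⟩ := exists_hat_eq_zero_off hS hne
  have hle : ∫ ξ, (1 * negLaplacianSymbol ξ - 1) ^ 2 * ‖U.hat ξ‖ ^ 2 ≤
      ∫ ξ, ε * ‖U.hat ξ‖ ^ 2 := by
    refine integral_mono_of_nonneg (ae_of_all _ fun ξ => by positivity)
      (U.integrable_norm_sq_hat.const_mul ε) ?_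
    filter_upwards [hsupp] with ξ hξ
    by_cases hξS : ξ ∈ S
    · simpa only [one_mul] using mul_le_mul_of_nonneg_right (le_of_lt hξS) (sq_nonneg ‖U.hat ξ‖)
    · simp [hξ hξS]
  rw [integral_sq_mul_norm_sq_hat, integral_const_mul, ← massSq_eq_integral_hat] at hle
  exact ⟨U, hU, by linarith⟩

end H2

end TrialFunctions

section Scaling

variable {N : ℕ}

lemma integral_norm_smul_sq {α E : Type*} [MeasurableSpace α] {μ : Measure α}
    [NormedAddCommGroup E] [NormedSpace ℝ E] (c : ℝ) (f : α → E) :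
    ∫ x, ‖(c • f) x‖ ^ 2 ∂μ = c ^ 2 * ∫ x, ‖f x‖ ^ 2 ∂μ := by
  simp only [Pi.smul_apply, norm_smul, mul_pow, Real.norm_eq_abs, sq_abs, integral_const_mul]

namespace H2

/-- Multiplication of an element of `H²(ℝ^N)` by a real number. -/
instance : SMul ℝ (H2 N) where
  smul c U :=
    { u := c • U.u
      grad := fun i => c • U.grad i
      lapl := c • U.lapl
      u_mem := U.u_mem.const_smul c
      grad_mem := fun i => (U.grad_mem i).const_smul c
      lapl_mem := U.lapl_mem.const_smul c
      grad_spec := fun i φ hφ => by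
        simp only [Pi.smul_apply, smul_mul_assoc, integral_smul, U.grad_spec i φ hφ, smul_neg]
      lapl_spec := fun φ hφ => by
        simp only [Pi.smul_apply, smul_mul_assoc, integral_smul, U.lapl_spec φ hφ] }

lemma massSq_smul (c : ℝ) (U : H2 N) : (c • U).massSq = c ^ 2 * U.massSq :=
  integral_norm_smul_sq c U.u

lemma lapSq_smul (c : ℝ) (U : H2 N) : (c • U).lapSq = c ^ 2 * U.lapSq :=
  integral_norm_smul_sq c U.lapl

lemma gradSq_smul (c : ℝ) (U : H2 N) : (c • U).gradSq = c ^ 2 * U.gradSq :=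
  (Finset.sum_congr rfl fun i _ => integral_norm_smul_sq c (U.grad i)).trans
    (Finset.mul_sum ..).symm

lemma pPow_smul (σ c : ℝ) (U : H2 N) :
    (c • U).pPow σ = |c| ^ (2 * σ + 2) * U.pPow σ := by
  simp only [pPow, ← integral_const_mul, ← Real.norm_eq_abs,
    ← Real.mul_rpow (norm_nonneg _) (norm_nonneg _), ← norm_smul]
  rfl

lemma massSq_sqrt_smul {s : ℝ} (hs : 0 ≤ s) (U : H2 N) : (√s • U).massSq = s * U.massSq := by
  rw [massSq_smul, Real.sq_sqrt hs]

theorem energy_sqrt_smul (σ : ℝ) {s : ℝ} (hs : 0 ≤ s) (U : H2 N) :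
    (√s • U).energy σ =
      s * (U.lapSq - 2 * U.gradSq) - s ^ (σ + 1) * (1 / (σ + 1) * U.pPow σ) := by
  have hpow : |√s| ^ (2 * σ + 2) = s ^ (σ + 1) := by
    rw [abs_of_nonneg (Real.sqrt_nonneg s), show 2 * σ + 2 = 2 * (σ + 1) by ring,
      Real.rpow_mul (Real.sqrt_nonneg s), Real.rpow_two, Real.sq_sqrt hs]
  rw [energy, lapSq_smul, gradSq_smul, pPow_smul, hpow, Real.sq_sqrt hs]
  ring

lemma pPow_nonneg (σ : ℝ) (U : H2 N) : 0 ≤ U.pPow σ :=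
  integral_nonneg fun _ => by positivity

theorem concaveOn_energy_sqrt_smul {σ : ℝ} (hσ : 0 ≤ σ) (U : H2 N) :
    ConcaveOn ℝ (Set.Ici 0) fun s => (√s • U).energy σ := by
  have hpow : ConvexOn ℝ (Set.Ici 0) fun s : ℝ => (1 / (σ + 1) * U.pPow σ) • s ^ (σ + 1) :=
    (convexOn_rpow (by linarith)).smul (mul_nonneg (by positivity) (U.pPow_nonneg σ))
  have hlin : ConcaveOn ℝ (Set.Ici 0) fun s : ℝ => s * (U.lapSq - 2 * U.gradSq) :=
    (LinearMap.mulRight ℝ (U.lapSq - 2 * U.gradSq)).concaveOn (convex_Ici 0)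
  refine (hlin.sub hpow).congr fun s hs => ?_
  rw [energy_sqrt_smul σ hs, Pi.sub_apply, smul_eq_mul]
  ring

end H2

end Scaling

section MinimalEnergy

variable {N : ℕ}

lemma EminE_le_energy (σ : ℝ) (U : H2 N) : EminE N σ U.massSq ≤ (U.energy σ : EReal) :=
  iInf₂_le (f := fun (V : H2 N) (_ : V.massSq = U.massSq) => (V.energy σ : EReal)) U rfl

lemma EminE_le_energy_sqrt_smul (σ : ℝ) {m : ℝ} (hm : 0 ≤ m) {U : H2 N} (hU : 0 < U.massSq) :
    EminE N σ m ≤ ((√(m / U.massSq) • U).energy σ : EReal) := by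
  have hmass : (√(m / U.massSq) • U).massSq = m := by
    rw [H2.massSq_sqrt_smul (by positivity), div_mul_cancel₀ m hU.ne']
  simpa only [hmass] using EminE_le_energy σ (√(m / U.massSq) • U)

theorem EminE_concave {σ : ℝ} (hσ : 0 ≤ σ) {m₁ m₂ θ : ℝ} (h₁ : 0 < m₁) (h₂ : 0 < m₂)
    (hθ₀ : 0 ≤ θ) (hθ₁ : θ ≤ 1) :
    (θ : EReal) * EminE N σ m₁ + ((1 - θ : ℝ) : EReal) * EminE N σ m₂ ≤
      EminE N σ (θ * m₁ + (1 - θ) * m₂) := by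
  refine le_iInf₂ fun U hU => ?_
  have hmass : 0 < U.massSq := by
    rw [hU]
    exact convex_Ioi (0 : ℝ) h₁ h₂ hθ₀ (sub_nonneg.2 hθ₁) (by ring)
  have hweights : θ * (m₁ / U.massSq) + (1 - θ) * (m₂ / U.massSq) = 1 := by
    rw [← mul_div_assoc, ← mul_div_assoc, ← add_div, ← hU, div_self hmass.ne']
  have hone : U.energy σ = (√(1 : ℝ) • U).energy σ := by
    rw [H2.energy_sqrt_smul σ zero_le_one, Real.one_rpow, one_mul, one_mul, H2.energy]
  have hconcave : θ * (√(m₁ / U.massSq) • U).energy σ +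
      (1 - θ) * (√(m₂ / U.massSq) • U).energy σ ≤ U.energy σ := by
    have h := (U.concaveOn_energy_sqrt_smul hσ).2 (div_pos h₁ hmass).le (div_pos h₂ hmass).le hθ₀
      (sub_nonneg.2 hθ₁) (by ring)
    simpa only [smul_eq_mul, hweights, ← hone] using h
  calc (θ : EReal) * EminE N σ m₁ + ((1 - θ : ℝ) : EReal) * EminE N σ m₂
      ≤ (θ : EReal) * (√(m₁ / U.massSq) • U).energy σ +
          ((1 - θ : ℝ) : EReal) * (√(m₂ / U.massSq) • U).energy σ := by
        gcongr
        · exact EminE_le_energy_sqrt_smul σ h₁.le hmass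
        · exact EminE_le_energy_sqrt_smul σ h₂.le hmass
    _ ≤ U.energy σ := by exact_mod_cast hconcave

theorem EminE_le_neg (hN : 1 ≤ N) {σ m : ℝ} (hσ : -1 ≤ σ) (hm : 0 < m) :
    EminE N σ m ≤ ((-m : ℝ) : EReal) := by
  refine EReal.le_of_forall_lt_iff_le.1 fun z hz => ?_
  have hz' : -m < z := by exact_mod_cast hz
  obtain ⟨U, hU, hquad⟩ :=
    H2.exists_lapSq_sub_two_mul_gradSq_le hN (div_pos (neg_lt_iff_pos_add.1 hz') hm)
  refine (EminE_le_energy_sqrt_smul σ hm.le hU).trans (EReal.coe_le_coe_iff.2 ?_)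
  have hpPow : 0 ≤ (m / U.massSq) ^ (σ + 1) * (1 / (σ + 1) * U.pPow σ) :=
    mul_nonneg (by positivity)
      (mul_nonneg (one_div_nonneg.2 (neg_le_iff_add_nonneg.1 hσ)) (U.pPow_nonneg σ))
  calc (√(m / U.massSq) • U).energy σ
      ≤ m / U.massSq * (U.lapSq - 2 * U.gradSq) := by
        rw [H2.energy_sqrt_smul σ (by positivity)]
        linarith
    _ ≤ m / U.massSq * (-(1 - (z + m) / m) * U.massSq) := by gcongr
    _ = z := by
        field_simp
        ring

end MinimalEnergy

section FourierInversion

variable {E F : Type*} [NormedAddCommGroup E] [InnerProductSpace ℝ E] [FiniteDimensional ℝ E]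
  [MeasurableSpace E] [BorelSpace E] [NormedAddCommGroup F] [InnerProductSpace ℂ F]
  [CompleteSpace F]

theorem coeFn_fourierInv_ae_eq {f : Lp F 2 (volume : Measure E)} (hf : Integrable f) :
    (𝓕⁻ f : Lp F 2 (volume : Measure E)) =ᵐ[volume] 𝓕⁻ (f : E → F) := by
  have hcont : Continuous fun x : E × E => (-innerₗ E) x.1 x.2 := by
    simp only [LinearMap.neg_apply, innerₗ_apply_apply]
    fun_prop
  refine ae_eq_of_integral_contDiff_smul_eq ((Lp.memLp _).locallyIntegrable one_le_two)
    (VectorFourier.fourierIntegral_continuous Real.continuous_fourierChar hcont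
      hf).locallyIntegrable ?_
  intro θ hθ hθc
  have hθ' : HasCompactSupport (Complex.ofRealCLM ∘ θ) := hθc.comp_left (map_zero _)
  let φ : 𝓢(E, ℂ) := hθ'.toSchwartzMap (Complex.ofRealCLM.contDiff.comp hθ)
  have hφ (x : E) (z : F) : θ x • z = φ x • z := (Complex.coe_smul (θ x) z).symm
  have hflip : (-innerₗ E).flip = -innerₗ E := by
    ext x y
    simp [real_inner_comm]
  have hswap := VectorFourier.integral_fourierIntegral_smul_eq_flip
    Real.continuous_fourierChar hcont (φ.integrable (μ := volume)) hf
  rw [hflip] at hswap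
  have hdist := congrArg (fun T : 𝓢'(E, F) => T φ) (Lp.fourierInv_toTemperedDistribution_eq f)
  simp only [TemperedDistribution.fourierInv_apply, Lp.toTemperedDistribution_apply] at hdist
  simp only [hφ]
  rw [← hdist, SchwartzMap.fourierInv_coe]
  exact hswap

theorem ae_enorm_fourierInv_le_lintegral_enorm (f : Lp F 2 (volume : Measure E)) :
    ∀ᵐ x, ‖(𝓕⁻ f : Lp F 2 (volume : Measure E)) x‖ₑ ≤ ∫⁻ ξ, ‖f ξ‖ₑ := by
  by_cases hfin : ∫⁻ ξ, ‖f ξ‖ₑ = ⊤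
  · simp [hfin]
  have hf : Integrable f := ⟨Lp.aestronglyMeasurable f, Ne.lt_top hfin⟩
  filter_upwards [coeFn_fourierInv_ae_eq hf] with x hx
  rw [hx, ← ofReal_norm, ← ofReal_integral_norm_eq_lintegral_enorm hf]
  exact ENNReal.ofReal_le_ofReal (VectorFourier.norm_fourierIntegral_le_integral_norm _ _ _ _ _)

lemma lintegral_enorm_sq_coeFn_lp {α F : Type*} [MeasurableSpace α] {μ : Measure α}
    [NormedAddCommGroup F] (f : Lp F 2 μ) : ∫⁻ x, ‖f x‖ₑ ^ 2 ∂μ = ‖f‖ₑ ^ 2 := by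
  rw [Lp.enorm_def]
  simpa using (eLpNorm_nnreal_pow_eq_lintegral (f := f) (μ := μ) (p := 2) two_ne_zero).symm

theorem lintegral_enorm_sq_fourierInv (f : Lp F 2 (volume : Measure E)) :
    ∫⁻ x, ‖(𝓕⁻ f : Lp F 2 (volume : Measure E)) x‖ₑ ^ 2 = ∫⁻ ξ, ‖f ξ‖ₑ ^ 2 := by
  have hnorm : ‖(𝓕⁻ f : Lp F 2 (volume : Measure E))‖ₑ = ‖f‖ₑ := by
    rw [← ofReal_norm, ← ofReal_norm, ← Lp.norm_fourier_eq, FourierTransform.fourier_fourierInv_eq]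
  rw [lintegral_enorm_sq_coeFn_lp, hnorm, ← lintegral_enorm_sq_coeFn_lp]

-- The part of `f` on `S` transforms to a function bounded by `t / 2`, so where `‖𝓕⁻ f‖ > t` the
-- transform of the part off `S` exceeds `t / 2`; Chebyshev and Plancherel bound that set.
theorem volume_lt_enorm_fourierInv_le (f : Lp F 2 (volume : Measure E)) {S : Set E}
    (hS : MeasurableSet S) {t : ℝ≥0∞} (ht₀ : t ≠ 0) (ht : t ≠ ⊤)
    (hfS : ∫⁻ ξ in S, ‖f ξ‖ₑ ≤ t / 2) :
    volume {x | t < ‖(𝓕⁻ f : Lp F 2 (volume : Measure E)) x‖ₑ} ≤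
      (∫⁻ ξ in Sᶜ, ‖f ξ‖ₑ ^ 2) / (t / 2) ^ 2 := by
  have hin := (Lp.memLp f).indicator hS
  have hout := (Lp.memLp f).indicator hS.compl
  set a : Lp F 2 (volume : Measure E) := hin.toLp
  set b : Lp F 2 (volume : Measure E) := hout.toLp
  have hsplit : f = a + b := by
    refine Lp.ext ?_
    filter_upwards [Lp.coeFn_add a b, hin.coeFn_toLp, hout.coeFn_toLp] with ξ hab hξa hξb
    rw [hab, Pi.add_apply, hξa, hξb, ← Pi.add_apply, Set.indicator_self_add_compl]
  have ha : ∫⁻ ξ, ‖a ξ‖ₑ = ∫⁻ ξ in S, ‖f ξ‖ₑ := by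
    rw [← lintegral_indicator hS]
    refine lintegral_congr_ae (hin.coeFn_toLp.mono fun ξ hξ => ?_)
    simp only [a, hξ, enorm_indicator_eq_indicator_enorm]
  have hb : ∫⁻ ξ, ‖b ξ‖ₑ ^ 2 = ∫⁻ ξ in Sᶜ, ‖f ξ‖ₑ ^ 2 := by
    rw [← lintegral_indicator hS.compl]
    refine lintegral_congr_ae (hout.coeFn_toLp.mono fun ξ hξ => ?_)
    by_cases h : ξ ∈ Sᶜ <;> simp [b, hξ, h]
  have hsub : ∀ᵐ x, t < ‖(𝓕⁻ f : Lp F 2 (volume : Measure E)) x‖ₑ →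
      (t / 2) ^ 2 ≤ ‖(𝓕⁻ b : Lp F 2 (volume : Measure E)) x‖ₑ ^ 2 := by
    filter_upwards [ae_enorm_fourierInv_le_lintegral_enorm a,
      Lp.coeFn_add (𝓕⁻ a : Lp F 2 (volume : Measure E)) (𝓕⁻ b)] with x hax habx hx
    rw [hsplit, FourierTransform.fourierInv_add, habx] at hx
    have hlt : t / 2 + t / 2 < t / 2 + ‖(𝓕⁻ b : Lp F 2 (volume : Measure E)) x‖ₑ := by
      rw [ENNReal.add_halves]
      exact hx.trans_le ((enorm_add_le _ _).trans (add_le_add_left (hax.trans (ha ▸ hfS)) _))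
    gcongr
    exact (lt_of_add_lt_add_left hlt).le
  refine (measure_mono_ae hsub).trans ?_
  rw [← hb, ← lintegral_enorm_sq_fourierInv]
  exact meas_ge_le_lintegral_div ((Lp.aestronglyMeasurable _).enorm.pow_const 2)
    (by simpa using ht₀) (by finiteness)

end FourierInversion

section PaleyInequality

theorem lintegral_rpow_le_of_measure_lt_le {α β : Type*} [MeasurableSpace α] [MeasurableSpace β]
    {μ : Measure α} {ν : Measure β} {g : α → ℝ} {k : β → ℝ} (hg : 0 ≤ᵐ[μ] g)
    (hgm : AEMeasurable g μ) (hk : 0 ≤ᵐ[ν] k) (hkm : AEMeasurable k ν) {A p q : ℝ} (hA : 0 ≤ A)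
    (hp : 0 < p) (hqp : q < p)
    (h : ∀ t > 0, μ {x | t < g x} ≤ ENNReal.ofReal (A / t ^ q) * ν {y | t < k y}) :
    ∫⁻ x, ENNReal.ofReal (g x ^ p) ∂μ ≤
      ENNReal.ofReal (A * (p / (p - q))) * ∫⁻ y, ENNReal.ofReal (k y ^ (p - q)) ∂ν := by
  have hpq : 0 < p - q := sub_pos.2 hqp
  have hlevel : ∀ t ∈ Set.Ioi (0 : ℝ), μ {x | t < g x} * ENNReal.ofReal (t ^ (p - 1)) ≤
      ENNReal.ofReal A * (ν {y | t < k y} * ENNReal.ofReal (t ^ (p - q - 1))) := by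
    intro t ht
    have ht' : 0 < t := ht
    have hpow : A / t ^ q * t ^ (p - 1) = A * t ^ (p - q - 1) := by
      rw [sub_right_comm p q 1, Real.rpow_sub ht' (p - 1) q]
      ring
    calc μ {x | t < g x} * ENNReal.ofReal (t ^ (p - 1))
        ≤ ENNReal.ofReal (A / t ^ q) * ν {y | t < k y} * ENNReal.ofReal (t ^ (p - 1)) := by
          gcongr
          exact h t ht
      _ = ENNReal.ofReal (A / t ^ q * t ^ (p - 1)) * ν {y | t < k y} := by
          rw [ENNReal.ofReal_mul (by positivity), mul_right_comm]
      _ = ENNReal.ofReal A * (ν {y | t < k y} * ENNReal.ofReal (t ^ (p - q - 1))) := by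
          rw [hpow, ENNReal.ofReal_mul hA, mul_right_comm, mul_assoc]
  have hint : ∫⁻ t in Set.Ioi 0, μ {x | t < g x} * ENNReal.ofReal (t ^ (p - 1)) ≤
      ENNReal.ofReal A *
        ∫⁻ t in Set.Ioi 0, ν {y | t < k y} * ENNReal.ofReal (t ^ (p - q - 1)) := by
    rw [← lintegral_const_mul' _ _ ENNReal.ofReal_ne_top]
    exact setLIntegral_mono' measurableSet_Ioi hlevel
  rw [lintegral_rpow_eq_lintegral_meas_lt_mul μ hg hgm hp,
    lintegral_rpow_eq_lintegral_meas_lt_mul ν hk hkm hpq]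
  calc ENNReal.ofReal p *
        ∫⁻ t in Set.Ioi 0, μ {x | t < g x} * ENNReal.ofReal (t ^ (p - 1))
      ≤ ENNReal.ofReal p * (ENNReal.ofReal A *
          ∫⁻ t in Set.Ioi 0, ν {y | t < k y} * ENNReal.ofReal (t ^ (p - q - 1))) := by
        gcongr
    _ = ENNReal.ofReal (A * (p / (p - q))) * (ENNReal.ofReal (p - q) *
          ∫⁻ t in Set.Ioi 0, ν {y | t < k y} * ENNReal.ofReal (t ^ (p - q - 1))) := by
        rw [← mul_assoc, ← mul_assoc, ← ENNReal.ofReal_mul hp.le,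
          ← ENNReal.ofReal_mul (by positivity)]
        congr 2
        field_simp

lemma setLIntegral_enorm_coeFn_lp_le {α F : Type*} [MeasurableSpace α] {μ : Measure α}
    [NormedAddCommGroup F] (f : Lp F 2 μ) (S : Set α) :
    ∫⁻ x in S, ‖f x‖ₑ ∂μ ≤ ‖f‖ₑ * μ S ^ (1 / 2 : ℝ) := by
  have hholder := eLpNorm_le_eLpNorm_mul_rpow_measure_univ (μ := μ.restrict S)
    (one_le_two (α := ℝ≥0∞)) (Lp.aestronglyMeasurable f).restrict
  have hexp : 1 / (1 : ℝ≥0∞).toReal - 1 / (2 : ℝ≥0∞).toReal = 1 / 2 := by norm_num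
  rw [eLpNorm_one_eq_lintegral_enorm, Measure.restrict_apply_univ, hexp] at hholder
  refine hholder.trans ?_
  rw [Lp.enorm_def]
  gcongr
  exact Measure.restrict_le_self

variable {E : Type*} [NormedAddCommGroup E] [InnerProductSpace ℝ E] [FiniteDimensional ℝ E]
  [MeasurableSpace E] [BorelSpace E]

/-- The volume of the ball of radius `‖ξ‖` centred at the origin. -/
def ballVolume (ξ : E) : ℝ :=
  volume.real (Metric.ball (0 : E) 1) * ‖ξ‖ ^ Module.finrank ℝ E

lemma ballVolume_nonneg (ξ : E) : 0 ≤ ballVolume ξ := by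
  unfold ballVolume
  positivity

lemma continuous_ballVolume : Continuous (ballVolume (E := E)) := by
  unfold ballVolume
  fun_prop

theorem volume_ballVolume_le [Nontrivial E] {a : ℝ} (ha : 0 ≤ a) :
    volume {ξ : E | ballVolume ξ ≤ a} ≤ ENNReal.ofReal a := by
  have hdim : Module.finrank ℝ E ≠ 0 := Module.finrank_pos.ne'
  set v := volume.real (Metric.ball (0 : E) 1) with hv
  have hv₀ : 0 < v :=
    ENNReal.toReal_pos (Metric.measure_ball_pos _ _ one_pos).ne' measure_ball_lt_top.ne
  set r : ℝ := (a / v) ^ (Module.finrank ℝ E : ℝ)⁻¹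
  have hr₀ : 0 ≤ r := by positivity
  have hrpow : r ^ Module.finrank ℝ E = a / v := Real.rpow_inv_natCast_pow (by positivity) hdim
  have hball : {ξ : E | ballVolume ξ ≤ a} ⊆ Metric.closedBall 0 r := by
    intro ξ hξ
    rw [mem_closedBall_zero_iff]
    refine le_of_pow_le_pow_left₀ hdim hr₀ ?_
    rw [hrpow, le_div_iff₀' hv₀]
    exact hξ
  calc volume {ξ : E | ballVolume ξ ≤ a} ≤ volume (Metric.closedBall (0 : E) r) :=
        measure_mono hball
    _ = ENNReal.ofReal (a / v) * ENNReal.ofReal v := by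
        rw [Measure.addHaar_closedBall _ _ hr₀, hrpow, hv, ofReal_measureReal]
    _ = ENNReal.ofReal a := by
        rw [← ENNReal.ofReal_mul (by positivity), div_mul_cancel₀ a hv₀.ne']

variable {F : Type*} [NormedAddCommGroup F]

lemma setLIntegral_enorm_ballVolume_le [Nontrivial E] (f : Lp F 2 (volume : Measure E)) {t : ℝ}
    (ht : 0 ≤ t) :
    ∫⁻ ξ in {ξ | 2 * ‖f‖ * √(ballVolume ξ) ≤ t}, ‖f ξ‖ₑ ≤ ENNReal.ofReal t / 2 := by
  refine (setLIntegral_enorm_coeFn_lp_le f _).trans ?_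
  rcases eq_or_ne f 0 with rfl | hf
  · simp
  have hnorm : 0 < ‖f‖ := norm_pos_iff.2 hf
  have hset : {ξ : E | 2 * ‖f‖ * √(ballVolume ξ) ≤ t} =
      {ξ | ballVolume ξ ≤ (t / (2 * ‖f‖)) ^ 2} := by
    ext ξ
    rw [Set.mem_ofPred_eq, Set.mem_ofPred_eq, ← Real.sqrt_le_left (by positivity),
      le_div_iff₀' (by positivity)]
  calc ‖f‖ₑ * volume {ξ : E | 2 * ‖f‖ * √(ballVolume ξ) ≤ t} ^ (1 / 2 : ℝ)
      ≤ ‖f‖ₑ * ENNReal.ofReal ((t / (2 * ‖f‖)) ^ 2) ^ (1 / 2 : ℝ) := by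
        rw [hset]
        gcongr
        exact volume_ballVolume_le (by positivity)
    _ = ENNReal.ofReal (‖f‖ * (t / (2 * ‖f‖))) := by
        rw [ENNReal.ofReal_rpow_of_nonneg (by positivity) (by norm_num), ← Real.sqrt_eq_rpow,
          Real.sqrt_sq (by positivity), ← ofReal_norm, ← ENNReal.ofReal_mul hnorm.le]
    _ = ENNReal.ofReal t / 2 := by
        rw [← mul_div_assoc, mul_comm 2, mul_div_mul_left t 2 hnorm.ne',
          ENNReal.ofReal_div_of_pos two_pos, ENNReal.ofReal_ofNat]

theorem lintegral_rpow_norm_fourierInv_le [Nontrivial E] [InnerProductSpace ℂ F] [CompleteSpace F]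
    (f : Lp F 2 (volume : Measure E)) {p : ℝ} (hp : 2 < p) :
    ∫⁻ x, ENNReal.ofReal (‖(𝓕⁻ f : Lp F 2 (volume : Measure E)) x‖ ^ p) ≤
      ENNReal.ofReal (4 * (p / (p - 2))) *
        ∫⁻ ξ, ‖f ξ‖ₑ ^ 2 * ENNReal.ofReal ((2 * ‖f‖ * √(ballVolume ξ)) ^ (p - 2)) := by
  let k : E → ℝ := fun ξ => 2 * ‖f‖ * √(ballVolume ξ)
  have hk : Measurable k := (continuous_const.mul continuous_ballVolume.sqrt).measurable
  have hf : AEMeasurable (fun ξ => ‖f ξ‖ₑ ^ 2) volume :=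
    (Lp.aestronglyMeasurable f).enorm.pow_const 2
  have hlevel : ∀ t > 0, volume {x | t < ‖(𝓕⁻ f : Lp F 2 (volume : Measure E)) x‖} ≤
      ENNReal.ofReal (4 / t ^ (2 : ℝ)) *
        volume.withDensity (fun ξ => ‖f ξ‖ₑ ^ 2) {ξ | t < k ξ} := by
    intro t ht
    have hweak := volume_lt_enorm_fourierInv_le f (measurableSet_le hk measurable_const)
      (ENNReal.ofReal_pos.2 ht).ne' ENNReal.ofReal_ne_top (setLIntegral_enorm_ballVolume_le f ht.le)
    have hcompl : {ξ | k ξ ≤ t}ᶜ = {ξ | t < k ξ} := by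
      simp only [Set.compl_ofPred, not_le]
    have hconst : ENNReal.ofReal (4 / t ^ (2 : ℝ)) = ((ENNReal.ofReal t / 2) ^ 2)⁻¹ := by
      rw [← ENNReal.ofReal_ofNat 2, ← ENNReal.ofReal_div_of_pos two_pos,
        ← ENNReal.ofReal_pow (by positivity), ← ENNReal.ofReal_inv_of_pos (by positivity),
        Real.rpow_two]
      congr 1
      field_simp
      norm_num
    simp only [← ofReal_norm, ENNReal.ofReal_lt_ofReal_iff_of_nonneg ht.le] at hweak
    rw [withDensity_apply _ (measurableSet_lt measurable_const hk), ← hcompl, hconst, mul_comm,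
      ← div_eq_mul_inv]
    simpa only [ofReal_norm] using hweak
  have hmain := lintegral_rpow_le_of_measure_lt_le (ae_of_all _ fun _ => norm_nonneg _)
    (Lp.aestronglyMeasurable (𝓕⁻ f : Lp F 2 (volume : Measure E))).norm.aemeasurable
    (ae_of_all _ fun ξ => by positivity) hk.aemeasurable zero_le_four (two_pos.trans hp) hp hlevel
  rwa [lintegral_withDensity_eq_lintegral_mul₀ hf
    (hk.pow_const _).ennreal_ofReal.aemeasurable] at hmain

end PaleyInequality

section GagliardoNirenberg

variable {N : ℕ}

lemma norm_rpow_le_one_add_negLaplacianSymbol_sq {s : ℝ} (hs₀ : 0 ≤ s) (hs : s ≤ 4) (ξ : Esp N) :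
    ‖ξ‖ ^ s ≤ 1 + negLaplacianSymbol ξ ^ 2 := by
  have hnorm : ‖ξ‖ ≤ 2 * Real.pi * ‖ξ‖ :=
    le_mul_of_one_le_left (norm_nonneg ξ) (by linarith [Real.pi_gt_three])
  have hsymbol : ‖ξ‖ ^ (4 : ℝ) ≤ negLaplacianSymbol ξ ^ 2 := by
    rw [Real.rpow_ofNat, negLaplacianSymbol, ← pow_mul]
    gcongr
  rcases le_total ‖ξ‖ 1 with hle | hle
  · exact (Real.rpow_le_one (norm_nonneg ξ) hle hs₀).trans
      (le_add_of_nonneg_right (sq_nonneg _))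
  · exact ((Real.rpow_le_rpow_of_exponent_le hle hs).trans hsymbol).trans
      (le_add_of_nonneg_left zero_le_one)

namespace H2

lemma norm_sq_hat (U : H2 N) : ‖U.hat‖ ^ 2 = U.massSq := by
  rw [massSq_eq_integral_hat, integral_norm_sq_coeFn_lp]

lemma massSq_nonneg (U : H2 N) : 0 ≤ U.massSq :=
  integral_nonneg fun _ => by positivity

lemma lapSq_nonneg (U : H2 N) : 0 ≤ U.lapSq :=
  integral_nonneg fun _ => by positivity

lemma pPow_eq_toReal_lintegral_fourierInv_hat (σ : ℝ) (U : H2 N) :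
    U.pPow σ = (∫⁻ x, ENNReal.ofReal
      (‖(𝓕⁻ U.hat : Lp ℂ 2 (volume : Measure (Esp N))) x‖ ^ (2 * σ + 2))).toReal := by
  rw [hat, FourierTransform.fourierInv_fourier_eq, pPow, integral_eq_lintegral_of_nonneg_ae
    (ae_of_all _ fun _ => by positivity)
    (U.u_mem.1.norm.aemeasurable.pow_const _).aestronglyMeasurable]
  congr 1
  exact lintegral_congr_ae (U.u_mem.coeFn_toLp.mono fun x hx => by simp only [hx])

lemma rpow_norm_hat_mul_ballVolume_le {σ : ℝ} (hσ : 0 ≤ σ) (hcrit : N * σ ≤ 4) (U : H2 N)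
    (ξ : Esp N) :
    (2 * ‖U.hat‖ * √(ballVolume ξ)) ^ (2 * σ) ≤
      (4 * volume.real (Metric.ball (0 : Esp N) 1)) ^ σ * U.massSq ^ σ *
        (1 + negLaplacianSymbol ξ ^ 2) := by
  have hmass := U.massSq_nonneg
  have hsq : (2 * ‖U.hat‖ * √(ballVolume ξ)) ^ 2 =
      4 * volume.real (Metric.ball (0 : Esp N) 1) * U.massSq * ‖ξ‖ ^ N := by
    rw [mul_pow, mul_pow, Real.sq_sqrt (ballVolume_nonneg ξ), norm_sq_hat, ballVolume,
      finrank_euclideanSpace_fin]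
    ring
  have hfreq : (‖ξ‖ ^ N) ^ σ ≤ 1 + negLaplacianSymbol ξ ^ 2 := by
    rw [← Real.rpow_natCast_mul (norm_nonneg ξ)]
    exact norm_rpow_le_one_add_negLaplacianSymbol_sq (by positivity) hcrit ξ
  rw [Real.rpow_mul (by positivity), Real.rpow_two, hsq,
    Real.mul_rpow (by positivity) (by positivity), Real.mul_rpow (by positivity) hmass]
  gcongr

lemma lintegral_enorm_sq_hat_mul_one_add_symbol_sq (U : H2 N) :
    ∫⁻ ξ, ‖U.hat ξ‖ₑ ^ 2 * ENNReal.ofReal (1 + negLaplacianSymbol ξ ^ 2) =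
      ENNReal.ofReal (U.massSq + U.lapSq) := by
  have hint := U.integrable_norm_sq_hat.fun_add U.integrable_symbol_sq_mul_norm_sq_hat
  rw [massSq_eq_integral_hat, lapSq_eq_integral_hat,
    ← integral_add U.integrable_norm_sq_hat U.integrable_symbol_sq_mul_norm_sq_hat,
    ofReal_integral_eq_lintegral_ofReal hint (ae_of_all _ fun ξ => by positivity)]
  refine lintegral_congr fun ξ => ?_
  rw [← ofReal_norm, ← ENNReal.ofReal_pow (norm_nonneg _), ← ENNReal.ofReal_mul (by positivity)]
  congr 1
  ring

theorem exists_pPow_le (hN : 1 ≤ N) {σ : ℝ} (hσ : 0 < σ) (hcrit : N * σ ≤ 4) :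
    ∃ C : ℝ, ∀ U : H2 N, U.pPow σ ≤ C * U.massSq ^ σ * (U.massSq + U.lapSq) := by
  have : Nonempty (Fin N) := ⟨⟨0, hN⟩⟩
  let A := (4 * volume.real (Metric.ball (0 : Esp N) 1)) ^ σ
  let K := 4 * ((2 * σ + 2) / (2 * σ))
  refine ⟨K * A, fun U => ?_⟩
  have hmass := U.massSq_nonneg
  have hlap := U.lapSq_nonneg
  have hpaley := lintegral_rpow_norm_fourierInv_le U.hat (p := 2 * σ + 2) (by linarith)
  rw [add_sub_cancel_right] at hpaley
  rw [pPow_eq_toReal_lintegral_fourierInv_hat]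
  refine ENNReal.toReal_le_of_le_ofReal (by positivity) (hpaley.trans ?_)
  calc ENNReal.ofReal K *
        ∫⁻ ξ, ‖U.hat ξ‖ₑ ^ 2 * ENNReal.ofReal ((2 * ‖U.hat‖ * √(ballVolume ξ)) ^ (2 * σ))
      ≤ ENNReal.ofReal K * ∫⁻ ξ, ‖U.hat ξ‖ₑ ^ 2 *
          ENNReal.ofReal (A * U.massSq ^ σ * (1 + negLaplacianSymbol ξ ^ 2)) := by
        gcongr with ξ
        exact U.rpow_norm_hat_mul_ballVolume_le hσ.le hcrit ξ
    _ = ENNReal.ofReal K *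
          (ENNReal.ofReal (A * U.massSq ^ σ) * ENNReal.ofReal (U.massSq + U.lapSq)) := by
        congr 1
        rw [← lintegral_enorm_sq_hat_mul_one_add_symbol_sq,
          ← lintegral_const_mul' _ _ ENNReal.ofReal_ne_top]
        simp only [ENNReal.ofReal_mul (show 0 ≤ A * U.massSq ^ σ by positivity), mul_left_comm]
    _ = ENNReal.ofReal (K * A * U.massSq ^ σ * (U.massSq + U.lapSq)) := by
        rw [← ENNReal.ofReal_mul (by positivity), ← ENNReal.ofReal_mul (by positivity)]
        congr 1
        ring

-- `pPow ≤ C m^σ (m + lapSq)` costs a fraction `δ = C m^σ / (σ + 1)` of the biharmonic term; the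
-- remaining fraction `1 - δ` still controls the gradient term.
theorem neg_mul_massSq_le_energy {σ C : ℝ} (hσ : -1 < σ) {U : H2 N}
    (hC : U.pPow σ ≤ C * U.massSq ^ σ * (U.massSq + U.lapSq))
    (hsmall : C / (σ + 1) * U.massSq ^ σ < 1) :
    -((1 - C / (σ + 1) * U.massSq ^ σ)⁻¹ + C / (σ + 1) * U.massSq ^ σ) * U.massSq ≤
      U.energy σ := by
  set δ := C / (σ + 1) * U.massSq ^ σ with hδ
  have hσ' : 0 < σ + 1 := by linarith
  have hgrad := U.two_mul_gradSq_le (sub_pos.2 hsmall)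
  have hpPow : 1 / (σ + 1) * U.pPow σ ≤ δ * (U.massSq + U.lapSq) :=
    calc 1 / (σ + 1) * U.pPow σ
        ≤ 1 / (σ + 1) * (C * U.massSq ^ σ * (U.massSq + U.lapSq)) := by gcongr
      _ = δ * (U.massSq + U.lapSq) := by
          rw [hδ]
          ring
  rw [energy]
  rw [div_eq_mul_inv] at hgrad
  linarith

end H2

end GagliardoNirenberg

section SmallMass

variable {N : ℕ} {σ : ℝ}

theorem exists_tendsto_one_neg_mul_le_EminE (hN : 1 ≤ N) (hσ : 0 < σ) (hcrit : N * σ ≤ 4) :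
    ∃ k : ℝ → ℝ, Tendsto k (𝓝[>] 0) (𝓝 1) ∧
      ∀ᶠ m in 𝓝[>] 0, ((-(k m * m) : ℝ) : EReal) ≤ EminE N σ m := by
  obtain ⟨C, hC⟩ := H2.exists_pPow_le hN hσ hcrit
  let δ : ℝ → ℝ := fun m => C / (σ + 1) * m ^ σ
  have hδ : Tendsto δ (𝓝[>] 0) (𝓝 0) := by
    have hcont : ContinuousAt δ 0 :=
      (Real.continuousAt_rpow_const 0 σ (Or.inr hσ.le)).const_mul _
    have hzero : δ 0 = 0 := by simp [δ, Real.zero_rpow hσ.ne']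
    exact (hzero ▸ hcont.tendsto).mono_left nhdsWithin_le_nhds
  refine ⟨fun m => (1 - δ m)⁻¹ + δ m, ?_, ?_⟩
  · simpa using ((hδ.const_sub 1).inv₀ (by norm_num)).add hδ
  · filter_upwards [hδ.eventually_lt_const one_pos] with m hm
    refine le_iInf₂ fun U hU => EReal.coe_le_coe_iff.2 ?_
    subst hU
    rw [← neg_mul]
    exact U.neg_mul_massSq_le_energy (by linarith) (hC U) hm

theorem tendsto_EminE_zero (hN : 1 ≤ N) (hσ : 0 < σ) (hcrit : N * σ ≤ 4) :
    Tendsto (fun m : ℝ => EminE N σ m) (𝓝[>] 0) (𝓝 0) := by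
  obtain ⟨k, hk, hle⟩ := exists_tendsto_one_neg_mul_le_EminE hN hσ hcrit
  have hid : Tendsto (fun m : ℝ => m) (𝓝[>] 0) (𝓝 0) := nhdsWithin_le_nhds
  have hlower : Tendsto (fun m => -(k m * m)) (𝓝[>] 0) (𝓝 0) := by
    simpa only [mul_zero, neg_zero] using (hk.mul hid).neg
  have hupper : Tendsto (fun m : ℝ => -m) (𝓝[>] 0) (𝓝 0) := by
    simpa only [neg_zero] using hid.neg
  refine tendsto_of_tendsto_of_tendsto_of_le_of_le' (EReal.tendsto_coe.2 hlower)
    (EReal.tendsto_coe.2 hupper) hle ?_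
  filter_upwards [self_mem_nhdsWithin] with m hm
  exact EminE_le_neg hN (by linarith) hm

theorem tendsto_EminE_div_neg_one (hN : 1 ≤ N) (hσ : 0 < σ) (hcrit : N * σ ≤ 4) :
    Tendsto (fun m : ℝ => EminE N σ m / ((m : ℝ) : EReal)) (𝓝[>] 0) (𝓝 (-1)) := by
  obtain ⟨k, hk, hle⟩ := exists_tendsto_one_neg_mul_le_EminE hN hσ hcrit
  have hlower : Tendsto (fun m => ((-k m : ℝ) : EReal)) (𝓝[>] 0) (𝓝 (-1)) :=
    EReal.tendsto_coe.2 hk.neg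
  have hdiv {m c : ℝ} (hm : 0 < m) : ((-(c * m) : ℝ) : EReal) / m = ((-c : ℝ) : EReal) := by
    rw [← EReal.coe_div, neg_div, mul_div_cancel_right₀ c hm.ne']
  have hmono {m : ℝ} (hm : 0 < m) {a b : EReal} (hab : a ≤ b) : a / (m : EReal) ≤ b / m :=
    EReal.div_le_div_right_of_nonneg (EReal.coe_nonneg.2 hm.le) hab
  refine tendsto_of_tendsto_of_tendsto_of_le_of_le' hlower tendsto_const_nhds ?_ ?_
  · filter_upwards [hle, self_mem_nhdsWithin] with m hm hpos
    exact (hdiv hpos).symm.trans_le (hmono hpos hm)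
  · filter_upwards [self_mem_nhdsWithin] with m hm
    have hneg : EminE N σ m ≤ ((-(1 * m) : ℝ) : EReal) := by
      simpa only [one_mul] using EminE_le_neg hN (by linarith) hm
    exact (hmono hm hneg).trans_eq ((hdiv hm).trans (by simp))

end SmallMass

end

/-- For `0 < Nσ ≤ 4`: `E_min` is concave on `(0,∞)` (with values in
`[-∞,∞)`), `E_min(m) ≤ -m`, `E_min(m) → 0` and `E_min(m)/m → -1` as `m ↓ 0`. -/
theorem stmt5 (N : ℕ) (σ : ℝ) (hN : 1 ≤ N) (hσ : 0 < σ) (hcrit : (N : ℝ) * σ ≤ 4) :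
    (∀ m₁ m₂ θ : ℝ, 0 < m₁ → 0 < m₂ → 0 ≤ θ → θ ≤ 1 →
      (θ : EReal) * EminE N σ m₁ + ((1 - θ : ℝ) : EReal) * EminE N σ m₂ ≤
        EminE N σ (θ * m₁ + (1 - θ) * m₂)) ∧
    (∀ m : ℝ, 0 < m → EminE N σ m ≤ ((-m : ℝ) : EReal)) ∧
    Tendsto (fun m : ℝ => EminE N σ m) (nhdsWithin 0 (Set.Ioi 0)) (nhds (0 : EReal)) ∧
    Tendsto (fun m : ℝ => EminE N σ m / ((m : ℝ) : EReal)) (nhdsWithin 0 (Set.Ioi 0))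
      (nhds (-1 : EReal)) := by
  exact ⟨fun _ _ _ h₁ h₂ hθ₀ hθ₁ => EminE_concave hσ.le h₁ h₂ hθ₀ hθ₁,
    fun _ hm => EminE_le_neg hN (by linarith) hm,
    tendsto_EminE_zero hN hσ hcrit, tendsto_EminE_div_neg_one hN hσ hcrit⟩

end
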